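/- arXiv:2112.11045 — 8 statements merged into one kernel-verified Lean document; each statement's English description precedes it below -/
import Mathlib

section
/- Let n ≥ 1 and m ≥ n+1. Fix sensor positions a_1,…,a_m ∈ ℝⁿ such that the vectors a_2 − a_1, …, a_m − a_1 span ℝⁿ, a true source position x⋆ ∈ ℝⁿ with x⋆ ≠ a_i for all i, and a constant c₀ > 0. Then there exist constants K₁, K₂ > 0 (depending only on a_1,…,a_m, x⋆, and c₀) such that: for every σ > 0 and every noise vector w = (w_1,…,w_m) ∈ ℝᵐ satisfying ‖w‖ ≤ c₀√m·σ and |w_i| ≤ ‖x⋆ − a_i‖/2 for all i, every global minimizer x̂ of the least-squares loss f(x) = Σ_{i=1}^m (‖x − a_i‖ − r_i)², where r_i = ‖x⋆ − a_i‖ + w_i, satisfies ‖x̂ − x⋆‖ ≤ K₁√m·σ + K₂·m·σ². -/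
/-!
Comparing the loss at a minimizer `x̂` with its value `‖w‖²` at the true position `x⋆` shows that
every range error `‖x̂ - aᵢ‖ - ‖x⋆ - aᵢ‖` has absolute value at most `2‖w‖`
(`abs_range_error_le`). Squared ranges are polynomials of degree two in the position with the same
quadratic part, so subtracting those of two sensors linearizes the problem: with `u = x̂ - x⋆`, the
inner product `⟪aᵢ - a₁, u⟫` is controlled by the range errors and their squares
(`abs_inner_sub_le`). Since the vectors `aᵢ - a₁` span the space, these inner products determine
`u` with a uniform stability constant (`exists_norm_le_of_span_eq_top`).
-/

/-- Stability of inner-product measurements: if the `v i` span a finite-dimensional space, then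
`u ↦ (⟪v i, u⟫)ᵢ` is injective, hence bounded below. -/
lemma exists_norm_le_of_span_eq_top {E ι : Type*} [NormedAddCommGroup E] [InnerProductSpace ℝ E]
    [FiniteDimensional ℝ E] [Fintype ι] (v : ι → E)
    (hv : Submodule.span ℝ (Set.range v) = ⊤) :
    ∃ C : ℝ, 0 < C ∧ ∀ (u : E) (B : ℝ), 0 ≤ B → (∀ i, |inner ℝ (v i) u| ≤ B) → ‖u‖ ≤ C * B := by
  let f : E →ₗ[ℝ] (ι → ℝ) := LinearMap.pi fun i => (innerSL ℝ (v i)).toLinearMap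
  have hf : ∀ u i, f u i = inner ℝ (v i) u := fun u i => rfl
  have hker : LinearMap.ker f = ⊥ := by
    refine (LinearMap.ker_eq_bot').2 fun u hu => ?_
    have hmem : u ∈ Submodule.span ℝ (Set.range v) := hv ▸ Submodule.mem_top
    have hle : Submodule.span ℝ (Set.range v) ≤ LinearMap.ker (innerSL ℝ u).toLinearMap := by
      rw [Submodule.span_le]
      rintro _ ⟨i, rfl⟩
      have h : inner ℝ (v i) u = 0 := by rw [← hf, hu]; rfl
      rw [real_inner_comm] at h
      simpa using h
    have h0 : inner ℝ u u = 0 := by simpa using hle hmem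
    exact inner_self_eq_zero.1 h0
  obtain ⟨K, hK, hanti⟩ := f.exists_antilipschitzWith hker
  refine ⟨K, by exact_mod_cast hK, fun u B hB h => ?_⟩
  have h1 : ‖u‖ ≤ K * ‖f u‖ := by simpa using hanti.le_mul_dist u 0
  have h2 : ‖f u‖ ≤ B := (pi_norm_le_iff_of_nonneg hB).2 fun i => by
    rw [Real.norm_eq_abs, hf]; exact h i
  exact h1.trans (mul_le_mul_of_nonneg_left h2 K.2)

/-- A residual vector no longer than the noise `w` forces errors of at most `2‖w‖`. -/
lemma abs_range_error_le {m : ℕ} (w : EuclideanSpace ℝ (Fin m)) (e : Fin m → ℝ)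
    (h : ∑ i, (e i - w i) ^ 2 ≤ ∑ i, (w i) ^ 2) (i : Fin m) : |e i| ≤ 2 * ‖w‖ := by
  have hw : ∑ i, (w i) ^ 2 = ‖w‖ ^ 2 := (EuclideanSpace.real_norm_sq_eq w).symm
  have h1 : |e i - w i| ≤ ‖w‖ := by
    refine abs_le_of_sq_le_sq ?_ (norm_nonneg w)
    have := Finset.single_le_sum (f := fun i => (e i - w i) ^ 2) (fun j _ => sq_nonneg _)
      (Finset.mem_univ i)
    dsimp only at this
    linarith
  have h2 : |w i| ≤ ‖w‖ := PiLp.norm_apply_le w i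
  rw [abs_le] at *
  constructor <;> linarith [h1.1, h1.2, h2.1, h2.2]

/-- Differencing the squared ranges to the sensors `p` and `q` cancels the quadratic term
`‖x - y‖²`, leaving a linear measurement of `x - y`. -/
lemma abs_inner_sub_le {E : Type*} [NormedAddCommGroup E] [InnerProductSpace ℝ E]
    (p q x y : E) (D ε : ℝ) (hp : ‖y - p‖ ≤ D) (hq : ‖y - q‖ ≤ D)
    (hpe : |‖x - p‖ - ‖y - p‖| ≤ ε) (hqe : |‖x - q‖ - ‖y - q‖| ≤ ε) :
    |inner ℝ (p - q) (x - y)| ≤ 2 * D * ε + ε ^ 2 := by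
  have hexp : ∀ s : E, ‖x - s‖ ^ 2 =
      ‖x - y‖ ^ 2 + 2 * inner ℝ (x - y) (y - s) + ‖y - s‖ ^ 2 := fun s => by
    rw [← norm_add_sq_real, sub_add_sub_cancel]
  have hbd : ∀ s : E, ‖y - s‖ ≤ D → |‖x - s‖ - ‖y - s‖| ≤ ε →
      |‖x - s‖ ^ 2 - ‖y - s‖ ^ 2| ≤ 2 * D * ε + ε ^ 2 := fun s hs he => by
    have hε : 0 ≤ ε := (abs_nonneg _).trans he
    have hsum : |‖x - s‖ + ‖y - s‖| ≤ 2 * D + ε := by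
      rw [abs_of_nonneg (by positivity)]
      linarith [(abs_le.1 he).2]
    calc |‖x - s‖ ^ 2 - ‖y - s‖ ^ 2|
        = |‖x - s‖ + ‖y - s‖| * |‖x - s‖ - ‖y - s‖| := by rw [sq_sub_sq, abs_mul]
      _ ≤ (2 * D + ε) * ε := mul_le_mul hsum he (abs_nonneg _) ((abs_nonneg _).trans hsum)
      _ = 2 * D * ε + ε ^ 2 := by ring
  have hin : inner ℝ (p - q) (x - y) = inner ℝ (x - y) (y - q) - inner ℝ (x - y) (y - p) := by
    rw [← inner_sub_right, sub_sub_sub_cancel_left, real_inner_comm]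
  have h1 := abs_le.1 (hbd p hp hpe)
  have h2 := abs_le.1 (hbd q hq hqe)
  rw [hin, abs_le]
  constructor <;> linarith [hexp p, hexp q, h1.1, h1.2, h2.1, h2.2]


/-- Estimation error of the TOA least-squares estimator: there are constants
`K₁, K₂ > 0` (depending only on the sensors `a`, the true position `x⋆`, and `c₀`)
such that for every `σ > 0` and every noise vector `w` with `‖w‖ ≤ c₀√m·σ` and
`|w_i| ≤ ‖x⋆ − a_i‖/2`, every global minimizer `x̂` of
`f(x) = Σ_i (‖x − a_i‖ − r_i)²`, `r_i = ‖x⋆ − a_i‖ + w_i`, satisfies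
`‖x̂ − x⋆‖ ≤ K₁√m·σ + K₂·m·σ²`. -/
theorem stmt0 (n m : ℕ) (hn : 1 ≤ n) (hm : n + 1 ≤ m)
    (a : Fin m → EuclideanSpace ℝ (Fin n))
    (hspan : Submodule.span ℝ (Set.range fun i => a i - a ⟨0, by omega⟩) = ⊤)
    (xs : EuclideanSpace ℝ (Fin n)) (hxs : ∀ i, xs ≠ a i)
    (c0 : ℝ) (hc0 : 0 < c0) :
    ∃ K1 K2 : ℝ, 0 < K1 ∧ 0 < K2 ∧
      ∀ σ : ℝ, 0 < σ →
        ∀ w : EuclideanSpace ℝ (Fin m),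
          ‖w‖ ≤ c0 * Real.sqrt m * σ →
          (∀ i, |w i| ≤ ‖xs - a i‖ / 2) →
          ∀ xhat : EuclideanSpace ℝ (Fin n),
            (∀ y : EuclideanSpace ℝ (Fin n),
              ∑ i, (‖xhat - a i‖ - (‖xs - a i‖ + w i)) ^ 2 ≤
                ∑ i, (‖y - a i‖ - (‖xs - a i‖ + w i)) ^ 2) →
            ‖xhat - xs‖ ≤ K1 * Real.sqrt m * σ + K2 * m * σ ^ 2 := by
  obtain ⟨C, hC, hstab⟩ := exists_norm_le_of_span_eq_top _ hspan
  -- The summand `1` only serves to make `K₁` visibly positive.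
  set D : ℝ := 1 + ∑ i, ‖xs - a i‖ with hD
  have hDpos : 0 < D := by positivity
  have hDle : ∀ i, ‖xs - a i‖ ≤ D := fun i => by
    have := Finset.single_le_sum (f := fun i => ‖xs - a i‖) (fun j _ => norm_nonneg _)
      (Finset.mem_univ i)
    linarith
  -- With `ε = 2 c₀ √m σ`, the constants are read off from `C (2 D ε + ε²)`.
  refine ⟨4 * C * D * c0, 4 * C * c0 ^ 2, by positivity, by positivity, ?_⟩
  intro σ hσ w hw _ xhat hmin
  have hcmp : ∑ i, (‖xhat - a i‖ - ‖xs - a i‖ - w i) ^ 2 ≤ ∑ i, (w i) ^ 2 := by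
    have h := hmin xs
    simpa only [sub_add_cancel_left, neg_sq, ← sub_sub] using h
  have herr : ∀ i, |‖xhat - a i‖ - ‖xs - a i‖| ≤ 2 * (c0 * Real.sqrt m * σ) := fun i =>
    (abs_range_error_le w (fun i => ‖xhat - a i‖ - ‖xs - a i‖) hcmp i).trans (by linarith)
  have hfin := hstab (xhat - xs) _ (by positivity) fun i =>
    abs_inner_sub_le (a i) (a ⟨0, by omega⟩) xhat xs D _ (hDle _) (hDle _) (herr _) (herr _)
  refine hfin.trans_eq ?_
  have hsq : Real.sqrt m ^ 2 = m := Real.sq_sqrt (Nat.cast_nonneg m)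
  linear_combination 4 * C * c0 ^ 2 * σ ^ 2 * hsq
end

section
/- Let n ≥ 1 and m ≥ n+1. Fix sensor positions a_1,…,a_m ∈ ℝⁿ, a true source position x⋆ ∈ ℝⁿ, constants c₀, σ, δ, K₁, K₂ > 0, and a noise vector w ∈ ℝᵐ with ‖w‖ ≤ c₀√m·σ and |w_i| ≤ ‖x⋆ − a_i‖/2 for all i. Let r_i = ‖x⋆ − a_i‖ + w_i, let f(x) = Σ_{i=1}^m (‖x − a_i‖ − r_i)², and let x̂ be a global minimizer of f satisfying ‖x̂ − x⋆‖ ≤ K₁√m·σ + K₂·m·σ². Define Λ := min over unit vectors z ∈ ℝⁿ of Σ_{i=1}^m ⟨z, (x⋆ − a_i)/‖x⋆ − a_i‖⟩². Assume (i) ‖x⋆ − a_i‖ > K₁√m·σ + K₂·m·σ² + δ for all i, and (ii) κ := (δ/(10m))·Λ − (K₁√m·σ + K₂·m·σ²) − (4c₀σ)/5 > 0. Then for every ε ∈ ℝⁿ with ‖ε‖ ≤ κ, f is twice continuously differentiable at x̂ + ε and its second derivative (Hessian) there is positive definite as a bilinear form; consequently f is strongly convex on the closed ball B(x̂, κ).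 -/
/-!
Along a line `t ↦ p + t • z` the summand `(‖q‖ - r)²`, with `q = p + t • z` and `u = q / ‖q‖`, has
second derivative `2 (⟪u, z⟫² + (1 - r / ‖q‖) (‖z‖² - ⟪u, z⟫²))` as long as `q ≠ 0`
(`hasDerivAt_term`, `hasDerivAt_termD`).  Let `D` bound the distance from the current point to the
true source.  Replacing the direction `u` by the direction from the sensor to the true source
changes `⟪u, z⟫²` by at most `4 D ‖z‖² / δ`, and `1 - r_i / ‖q‖ ≥ -(D + |w_i|) / (9 δ / 10)`
(`term_lower_bound`).

Summing over the sensors, the Cauchy-Schwarz bound `∑ |w_i| ≤ √m ‖w‖ ≤ m c₀ σ` and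
`D ≤ E + κ = δ Λ / (10 m) - 4 c₀ σ / 5`, where `E` bounds the estimation error, give a second
derivative of `f` of at least `Λ / 2` times `‖z‖²` at every point of the ball (`hess_lower_bound`).
This one-variable bound yields the Hessian bound (`iteratedFDeriv_two_eq_of_line`) and, applied on
all segments of the ball, strong convexity with constant `Λ / 2` (`strongConvexOn_of_line`).
-/

open scoped RealInnerProductSpace

section Helpers

variable {E : Type*} [NormedAddCommGroup E] [InnerProductSpace ℝ E]

/-- First derivative, in the direction `z` at the displacement `q` from the sensor, of the
summand `q ↦ (‖q‖ - r) ^ 2`. -/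
noncomputable def termD (r : ℝ) (z q : E) : ℝ :=
  2 * (⟪q, z⟫ - r * (⟪q, z⟫ / ‖q‖))

/-- Second derivative, in the direction `z` at the displacement `q` from the sensor, of the
summand `q ↦ (‖q‖ - r) ^ 2`. -/
noncomputable def termDD (r : ℝ) (z q : E) : ℝ :=
  2 * (‖z‖ ^ 2 - r * (‖z‖ ^ 2 / ‖q‖ - ⟪q, z⟫ ^ 2 / ‖q‖ ^ 3))

lemma hasDerivAt_line (p z : E) (t : ℝ) : HasDerivAt (fun s : ℝ => p + s • z) z t := by
  simpa using ((hasDerivAt_id t).smul_const z).const_add p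

lemma hasDerivAt_norm_line (p z : E) (t : ℝ) (h : p + t • z ≠ 0) :
    HasDerivAt (fun s : ℝ => ‖p + s • z‖) (⟪p + t • z, z⟫ / ‖p + t • z‖) t := by
  have h1 := (hasDerivAt_line p z t).norm_sq
  have h2 := h1.sqrt (by positivity)
  simp only [Real.sqrt_sq (norm_nonneg _)] at h2
  convert h2 using 1
  have := norm_pos_iff.2 h
  field_simp

lemma hasDerivAt_inner_line (p z : E) (t : ℝ) :
    HasDerivAt (fun s : ℝ => ⟪p + s • z, z⟫) (‖z‖ ^ 2) t := by
  have := (hasDerivAt_line p z t).inner ℝ (hasDerivAt_const t z)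
  simpa [real_inner_self_eq_norm_sq] using this

lemma hasDerivAt_term (r : ℝ) (p z : E) (t : ℝ) (h : p + t • z ≠ 0) :
    HasDerivAt (fun s : ℝ => (‖p + s • z‖ - r) ^ 2) (termD r z (p + t • z)) t := by
  have h1 := ((hasDerivAt_norm_line p z t h).sub_const r).pow 2
  refine h1.congr_deriv ?_
  have := norm_pos_iff.2 h
  unfold termD
  field_simp
  push_cast
  ring

lemma hasDerivAt_termD (r : ℝ) (p z : E) (t : ℝ) (h : p + t • z ≠ 0) :
    HasDerivAt (fun s : ℝ => termD r z (p + s • z)) (termDD r z (p + t • z)) t := by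
  have hp := norm_pos_iff.2 h
  have h1 := (((hasDerivAt_inner_line p z t).sub
    (((hasDerivAt_inner_line p z t).div (hasDerivAt_norm_line p z t h) hp.ne').const_mul
      r))).const_mul 2
  refine h1.congr_deriv ?_
  unfold termDD
  field_simp

/-- Lower bound for half the second derivative of one summand at displacement `q`, in terms of
the displacement `p` of the true source; `D` bounds the distance between the two points. -/
lemma term_lower_bound (p q z : E) (w D δ : ℝ) (hδ : 0 < δ) (hD : ‖q - p‖ ≤ D)
    (hDδ : D ≤ δ / 10) (hp : δ < ‖p‖) :
    ⟪z, ‖p‖⁻¹ • p⟫ ^ 2 - (46 / 9 * (D / δ) + 10 / 9 * (|w| / δ)) * ‖z‖ ^ 2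
      ≤ termDD (‖p‖ + w) z q / 2 := by
  have hp0 : 0 < ‖p‖ := hδ.trans hp
  have hD0 : 0 ≤ D := (norm_nonneg _).trans hD
  have hdR : |‖q‖ - ‖p‖| ≤ D := (abs_norm_sub_norm_le q p).trans hD
  have hdR' := abs_le.1 hdR
  have hq : 9 / 10 * δ < ‖q‖ := by linarith
  have hq0 : 0 < ‖q‖ := by linarith
  set u := ‖q‖⁻¹ • q with hu
  set v := ‖p‖⁻¹ • p with hv
  have hun : ‖u‖ = 1 := by rw [hu, norm_smul, norm_inv, norm_norm, inv_mul_cancel₀ hq0.ne']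
  have hvn : ‖v‖ = 1 := by rw [hv, norm_smul, norm_inv, norm_norm, inv_mul_cancel₀ hp0.ne']
  -- `‖p‖ (u - v) = (q - p) - (‖q‖ - ‖p‖) u`
  have huv : ‖u - v‖ ≤ 2 * (D / δ) := by
    have e : ‖p‖ • (u - v) = (q - p) - (‖q‖ - ‖p‖) • u := by
      have e1 : ‖q‖ • u = q := by rw [hu, smul_smul, mul_inv_cancel₀ hq0.ne', one_smul]
      have e2 : ‖p‖ • v = p := by rw [hv, smul_smul, mul_inv_cancel₀ hp0.ne', one_smul]
      rw [smul_sub, sub_smul, e1, e2]; abel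
    have h1 : ‖p‖ * ‖u - v‖ ≤ 2 * D := by
      calc ‖p‖ * ‖u - v‖ = ‖‖p‖ • (u - v)‖ := by rw [norm_smul, norm_norm]
        _ = ‖(q - p) - (‖q‖ - ‖p‖) • u‖ := by rw [e]
        _ ≤ ‖q - p‖ + ‖(‖q‖ - ‖p‖) • u‖ := norm_sub_le _ _
        _ = ‖q - p‖ + |‖q‖ - ‖p‖| := by rw [norm_smul, hun, mul_one, Real.norm_eq_abs]
        _ ≤ 2 * D := by linarith
    have h2 : δ * ‖u - v‖ ≤ 2 * D :=
      (mul_le_mul_of_nonneg_right hp.le (norm_nonneg _)).trans h1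
    rw [← mul_div_assoc, le_div_iff₀ hδ]; linarith
  have hsq : ⟪z, v⟫ ^ 2 - 4 * (D / δ) * ‖z‖ ^ 2 ≤ ⟪z, u⟫ ^ 2 := by
    have e : ⟪z, v⟫ ^ 2 - ⟪z, u⟫ ^ 2 = ⟪z, v - u⟫ * ⟪z, v + u⟫ := by
      rw [inner_sub_right, inner_add_right]; ring
    have h1 : |⟪z, v - u⟫| ≤ ‖z‖ * (2 * (D / δ)) :=
      (abs_real_inner_le_norm _ _).trans
        (mul_le_mul_of_nonneg_left (by rwa [norm_sub_rev]) (norm_nonneg _))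
    have h2 : |⟪z, v + u⟫| ≤ ‖z‖ * 2 :=
      (abs_real_inner_le_norm _ _).trans
        (mul_le_mul_of_nonneg_left ((norm_add_le _ _).trans (by rw [hun, hvn]; norm_num))
          (norm_nonneg _))
    have h3 : ⟪z, v - u⟫ * ⟪z, v + u⟫ ≤ (‖z‖ * (2 * (D / δ))) * (‖z‖ * 2) := by
      refine (le_abs_self _).trans ?_
      rw [abs_mul]
      exact mul_le_mul h1 h2 (abs_nonneg _) (by positivity)
    nlinarith
  have hCS : ⟪z, u⟫ ^ 2 ≤ ‖z‖ ^ 2 := by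
    have h1 := abs_real_inner_le_norm z u
    rw [hun, mul_one] at h1
    exact sq_le_sq.2 (by rwa [abs_norm])
  have hcoef : -(10 / 9 * (D / δ) + 10 / 9 * (|w| / δ)) ≤ 1 - (‖p‖ + w) / ‖q‖ := by
    have e : 1 - (‖p‖ + w) / ‖q‖ = -((‖p‖ + w - ‖q‖) / ‖q‖) := by field_simp; ring
    rw [e]
    refine neg_le_neg ?_
    calc (‖p‖ + w - ‖q‖) / ‖q‖ ≤ (D + |w|) / ‖q‖ := by
          gcongr; linarith [le_abs_self w]
      _ ≤ (D + |w|) / (9 / 10 * δ) := by gcongr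
      _ = _ := by field_simp
  have key : termDD (‖p‖ + w) z q / 2
      = ⟪z, u⟫ ^ 2 + (1 - (‖p‖ + w) / ‖q‖) * (‖z‖ ^ 2 - ⟪z, u⟫ ^ 2) := by
    rw [hu, inner_smul_right, real_inner_comm]
    unfold termDD
    field_simp
    ring
  rw [key]
  have h4 := mul_le_mul_of_nonneg_right hcoef (sub_nonneg.2 hCS)
  have h5 : 0 ≤ (10 / 9 * (D / δ) + 10 / 9 * (|w| / δ)) * ⟪z, u⟫ ^ 2 := by positivity
  nlinarith

/-- The Hessian quadratic form is the second derivative along a line. -/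
lemma iteratedFDeriv_two_eq_of_line (f : E → ℝ) (x z : E) (hf : ContDiffAt ℝ 2 f x)
    (g : ℝ → ℝ) (c : ℝ)
    (hg : ∀ᶠ t in nhds (0 : ℝ), HasDerivAt (fun s : ℝ => f (x + s • z)) (g t) t)
    (hg' : HasDerivAt g c 0) :
    iteratedFDeriv ℝ 2 f x ![z, z] = c := by
  rw [iteratedFDeriv_two_apply]
  simp only [Matrix.cons_val_zero, Matrix.cons_val_one]
  have hd : DifferentiableAt ℝ (fderiv ℝ f) x :=
    (hf.fderiv_right (m := 1) (by norm_num)).differentiableAt (by norm_num)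
  have hl := hasDerivAt_line x z 0
  have hx0 : x + (0 : ℝ) • z = x := by simp
  have h1 : HasDerivAt (fun t : ℝ => fderiv ℝ f (x + t • z) z) (fderiv ℝ (fderiv ℝ f) x z z) 0 := by
    have h2 : HasDerivAt (fun t : ℝ => fderiv ℝ f (x + t • z)) (fderiv ℝ (fderiv ℝ f) x z) 0 := by
      have h3 : HasFDerivAt (fderiv ℝ f) (fderiv ℝ (fderiv ℝ f) x) (x + (0 : ℝ) • z) := by
        rw [hx0]; exact hd.hasFDerivAt
      exact h3.comp_hasDerivAt 0 hl
    simpa using h2.clm_apply (hasDerivAt_const 0 z)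
  have hev : ∀ᶠ y in nhds x, ContDiffAt ℝ 2 f y := hf.eventually (by simp)
  have hev' : ∀ᶠ t in nhds (0 : ℝ), ContDiffAt ℝ 2 f (x + t • z) := by
    have ht : Filter.Tendsto (fun t : ℝ => x + t • z) (nhds 0) (nhds x) := by
      have := hl.continuousAt.tendsto
      rwa [hx0] at this
    exact ht.eventually hev
  have heq : g =ᶠ[nhds 0] fun t : ℝ => fderiv ℝ f (x + t • z) z := by
    filter_upwards [hg, hev'] with t h1 h2
    exact h1.unique
      ((h2.differentiableAt (by norm_num)).hasFDerivAt.comp_hasDerivAt t (hasDerivAt_line x z t))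
  exact (h1.congr_of_eventuallyEq heq).unique hg'

/-- A lower bound `μ` on the second derivatives along segments of a convex set gives strong
convexity. -/
lemma strongConvexOn_of_line (f : E → ℝ) (S : Set E) (hS : Convex ℝ S) (μ : ℝ)
    (g g' : E → E → ℝ)
    (h1 : ∀ x z : E, ∀ t : ℝ, x + t • z ∈ S →
      HasDerivAt (fun s : ℝ => f (x + s • z)) (g z (x + t • z)) t)
    (h2 : ∀ x z : E, ∀ t : ℝ, x + t • z ∈ S →
      HasDerivAt (fun s : ℝ => g z (x + s • z)) (g' z (x + t • z)) t)
    (h3 : ∀ x ∈ S, ∀ z, μ * ‖z‖ ^ 2 ≤ g' z x) :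
    StrongConvexOn S μ f := by
  rw [strongConvexOn_iff_convex]
  refine ⟨hS, fun x hx y hy α β hα hβ hαβ => ?_⟩
  set z := y - x with hz
  have hmem : ∀ t ∈ Set.Icc (0 : ℝ) 1, x + t • z ∈ S := fun t ht => hS.add_smul_sub_mem hx hy ht
  have d1 : ∀ t ∈ Set.Icc (0 : ℝ) 1, HasDerivAt
      (fun s : ℝ => f (x + s • z) - μ / 2 * ‖x + s • z‖ ^ 2)
      (g z (x + t • z) - μ * ⟪x + t • z, z⟫) t := by
    intro t ht
    have := (h1 x z t (hmem t ht)).sub (((hasDerivAt_line x z t).norm_sq).const_mul (μ / 2))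
    exact this.congr_deriv (by ring)
  have d2 : ∀ t ∈ Set.Icc (0 : ℝ) 1, HasDerivAt
      (fun s : ℝ => g z (x + s • z) - μ * ⟪x + s • z, z⟫)
      (g' z (x + t • z) - μ * ‖z‖ ^ 2) t := fun t ht =>
    (h2 x z t (hmem t ht)).sub ((hasDerivAt_inner_line x z t).const_mul μ)
  have hc : ConvexOn ℝ (Set.Icc (0 : ℝ) 1) (fun s : ℝ => f (x + s • z) - μ / 2 * ‖x + s • z‖ ^ 2) := by
    refine convexOn_of_hasDerivWithinAt2_nonneg (convex_Icc 0 1)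
      (fun t ht => (d1 t ht).continuousAt.continuousWithinAt)
      (fun t ht => (d1 t (interior_subset ht)).hasDerivWithinAt)
      (fun t ht => (d2 t (interior_subset ht)).hasDerivWithinAt)
      (fun t ht => sub_nonneg.2 (h3 _ (hmem t (interior_subset ht)) z))
  have := hc.2 (Set.left_mem_Icc.2 zero_le_one) (Set.right_mem_Icc.2 zero_le_one) hα hβ hαβ
  have e1 : α • x + β • y = x + β • z := by
    rw [hz, eq_sub_of_add_eq hαβ]
    module
  have e2 : x + (1 : ℝ) • z = y := by rw [hz]; module
  rw [e1]
  simp only [smul_eq_mul, mul_zero, mul_one, zero_add, zero_smul, add_zero] at this ⊢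
  rwa [e2] at this

end Helpers

/-- The second derivative of the loss in a direction `z` is at least `Λ / 2 * ‖z‖ ^ 2` at every
point whose distance to the true source is at most `δ Λ / (10 m) - 4 c₀ σ / 5`. -/
lemma hess_lower_bound {E : Type*} [NormedAddCommGroup E] [InnerProductSpace ℝ E] (m : ℕ)
    (hm : 0 < m) (a : Fin m → E) (xs : E) (c0 σ δ : ℝ) (hc0 : 0 < c0) (hσ : 0 < σ) (hδ : 0 < δ)
    (w : EuclideanSpace ℝ (Fin m)) (hw : ‖w‖ ≤ c0 * Real.sqrt m * σ) (Λ D : ℝ)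
    (hΛ : IsLeast {t : ℝ | ∃ z : E, ‖z‖ = 1 ∧
      t = ∑ i, ⟪z, ‖xs - a i‖⁻¹ • (xs - a i)⟫ ^ 2} Λ)
    (hdist : ∀ i, δ < ‖xs - a i‖)
    (hD : D = δ / (10 * m) * Λ - 4 * c0 * σ / 5)
    (x : E) (hx : ‖x - xs‖ ≤ D) :
    (∀ i, x - a i ≠ 0) ∧
    ∀ z, Λ / 2 * ‖z‖ ^ 2 ≤ ∑ i, termDD (‖xs - a i‖ + w i) z (x - a i) := by
  have hm' : (0 : ℝ) < m := by exact_mod_cast hm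
  have hD0 : 0 ≤ D := (norm_nonneg _).trans hx
  have hΛm : Λ ≤ m := by
    obtain ⟨z, hz, hz'⟩ := hΛ.1
    rw [hz']
    calc ∑ i, ⟪z, ‖xs - a i‖⁻¹ • (xs - a i)⟫ ^ 2 ≤ ∑ _i : Fin m, (1 : ℝ) := by
          refine Finset.sum_le_sum fun i _ => ?_
          have hpos : 0 < ‖xs - a i‖ := hδ.trans (hdist i)
          have h1 := abs_real_inner_le_norm z (‖xs - a i‖⁻¹ • (xs - a i))
          rw [hz, norm_smul, norm_inv, norm_norm, inv_mul_cancel₀ hpos.ne', mul_one] at h1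
          exact (sq_le_one_iff_abs_le_one _).2 h1
      _ = m := by simp
  have hcs : 0 < c0 * σ := mul_pos hc0 hσ
  -- `m D / δ` and `m c₀ σ / δ` are the two quantities in which the final estimate is linear
  have hX : m * (D / δ) = Λ / 10 - 4 / 5 * (m * (c0 * σ) / δ) := by
    rw [hD]; field_simp
  have hDδ : D ≤ δ / 10 := by
    have : δ / (10 * m) * Λ ≤ δ / (10 * m) * m := by gcongr
    have e : δ / (10 * m) * m = δ / 10 := by field_simp
    linarith
  have hsumw : ∑ i, |w i| ≤ m * (c0 * σ) := by
    have h1 : (∑ i, |w i|) ^ 2 ≤ m * ‖w‖ ^ 2 := by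
      have := sq_sum_le_card_mul_sum_sq (s := Finset.univ) (f := fun i => |w i|)
      simpa [EuclideanSpace.norm_sq_eq] using this
    have h2 : ‖w‖ ^ 2 ≤ m * (c0 * σ) ^ 2 := by
      calc ‖w‖ ^ 2 ≤ (c0 * Real.sqrt m * σ) ^ 2 := by gcongr
        _ = (Real.sqrt m) ^ 2 * (c0 * σ) ^ 2 := by ring
        _ = _ := by rw [Real.sq_sqrt hm'.le]
    refine le_of_sq_le_sq ?_ (by positivity)
    calc (∑ i, |w i|) ^ 2 ≤ m * ‖w‖ ^ 2 := h1
      _ ≤ m * (m * (c0 * σ) ^ 2) := by gcongr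
      _ = _ := by ring
  have hW : (∑ i, |w i|) / δ ≤ m * (c0 * σ) / δ := by gcongr
  have hW0 : 0 ≤ m * (c0 * σ) / δ := by positivity
  have hΛ0 : 0 ≤ Λ := by
    have : 0 ≤ m * (D / δ) := by positivity
    linarith
  have hxi : ∀ i, ‖(x - a i) - (xs - a i)‖ ≤ D := fun i => by
    rw [sub_sub_sub_cancel_right]; exact hx
  refine ⟨fun i h0 => ?_, fun z => ?_⟩
  · have := hxi i
    rw [h0, zero_sub, norm_neg] at this
    linarith [hdist i]
  -- homogeneity extends the unit-vector minimum to all `z`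
  have hΛz : Λ * ‖z‖ ^ 2 ≤ ∑ i, ⟪z, ‖xs - a i‖⁻¹ • (xs - a i)⟫ ^ 2 := by
    rcases eq_or_ne z 0 with rfl | hz
    · simp
    have hz0 := norm_pos_iff.2 hz
    have := hΛ.2 ⟨‖z‖⁻¹ • z, by rw [norm_smul, norm_inv, norm_norm, inv_mul_cancel₀ hz0.ne'], rfl⟩
    simp only [real_inner_smul_left _ _ (‖z‖⁻¹), mul_pow, ← Finset.mul_sum] at this
    calc Λ * ‖z‖ ^ 2 ≤ ((‖z‖⁻¹) ^ 2 * ∑ i, ⟪z, ‖xs - a i‖⁻¹ • (xs - a i)⟫ ^ 2) * ‖z‖ ^ 2 := by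
          gcongr
      _ = _ := by field_simp
  have hs := Finset.sum_le_sum fun i (_ : i ∈ Finset.univ) =>
    term_lower_bound (xs - a i) (x - a i) z (w i) D δ hδ (hxi i) hDδ (hdist i)
  have hsum : ∑ i : Fin m, (46 / 9 * (D / δ) + 10 / 9 * (|w i| / δ))
      = 46 / 9 * (D / δ) * m + 10 / 9 * ((∑ i, |w i|) / δ) := by
    rw [Finset.sum_add_distrib, Finset.sum_div, Finset.mul_sum, Finset.sum_const,
      Finset.card_univ, Fintype.card_fin, nsmul_eq_mul]
    ring
  rw [Finset.sum_sub_distrib, ← Finset.sum_mul, hsum, ← Finset.sum_div] at hs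
  have hcoef : 46 / 9 * (D / δ) * m + 10 / 9 * ((∑ i, |w i|) / δ) ≤ 3 / 4 * Λ := by
    linarith
  have h6 := mul_le_mul_of_nonneg_right hcoef (sq_nonneg ‖z‖)
  nlinarith

/-- Local strong convexity of the TOA least-squares loss at a least-squares
estimate `x̂`: under the noise bounds, the estimation-error bound, the separation
condition (i), and `κ := (δ/(10m))Λ − (K₁√mσ + K₂mσ²) − 4c₀σ/5 > 0` (ii), the loss
`f` is twice continuously differentiable at every point `x̂ + ε` with `‖ε‖ ≤ κ`, has
positive definite Hessian there, and is strongly convex on the closed ball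
`B(x̂, κ)`. -/
theorem stmt1 (n m : ℕ) (hn : 1 ≤ n) (hm : n + 1 ≤ m)
    (a : Fin m → EuclideanSpace ℝ (Fin n)) (xs : EuclideanSpace ℝ (Fin n))
    (c0 σ δ K1 K2 : ℝ) (hc0 : 0 < c0) (hσ : 0 < σ) (hδ : 0 < δ)
    (hK1 : 0 < K1) (hK2 : 0 < K2)
    (w : EuclideanSpace ℝ (Fin m))
    (hw : ‖w‖ ≤ c0 * Real.sqrt m * σ)
    (hwi : ∀ i, |w i| ≤ ‖xs - a i‖ / 2)
    (f : EuclideanSpace ℝ (Fin n) → ℝ)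
    (hf : f = fun x => ∑ i, (‖x - a i‖ - (‖xs - a i‖ + w i)) ^ 2)
    (xhat : EuclideanSpace ℝ (Fin n))
    (hmin : ∀ y : EuclideanSpace ℝ (Fin n), f xhat ≤ f y)
    (hest : ‖xhat - xs‖ ≤ K1 * Real.sqrt m * σ + K2 * m * σ ^ 2)
    (Λ : ℝ)
    (hΛ : IsLeast {t : ℝ | ∃ z : EuclideanSpace ℝ (Fin n), ‖z‖ = 1 ∧
      t = ∑ i, ⟪z, ‖xs - a i‖⁻¹ • (xs - a i)⟫ ^ 2} Λ)
    (hdist : ∀ i, K1 * Real.sqrt m * σ + K2 * m * σ ^ 2 + δ < ‖xs - a i‖)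
    (κ : ℝ)
    (hκdef : κ = δ / (10 * m) * Λ - (K1 * Real.sqrt m * σ + K2 * m * σ ^ 2) -
      4 * c0 * σ / 5)
    (hκ : 0 < κ) :
    (∀ ε : EuclideanSpace ℝ (Fin n), ‖ε‖ ≤ κ →
      ContDiffAt ℝ 2 f (xhat + ε) ∧
      ∀ z : EuclideanSpace ℝ (Fin n), z ≠ 0 →
        0 < iteratedFDeriv ℝ 2 f (xhat + ε) ![z, z]) ∧
    ∃ μ : ℝ, 0 < μ ∧ StrongConvexOn (Metric.closedBall xhat κ) μ f := by
  have hm0 : 0 < m := by omega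
  set e := K1 * Real.sqrt m * σ + K2 * m * σ ^ 2 with he
  have he0 : 0 < e := by
    have : (0 : ℝ) < m := by exact_mod_cast hm0
    positivity
  have key : ∀ x ∈ Metric.closedBall xhat κ, (∀ i, x - a i ≠ 0) ∧
      ∀ z, Λ / 2 * ‖z‖ ^ 2 ≤ ∑ i, termDD (‖xs - a i‖ + w i) z (x - a i) := by
    intro x hx
    refine hess_lower_bound m hm0 a xs c0 σ δ hc0 hσ hδ w hw Λ (κ + e) hΛ
      (fun i => by linarith [hdist i]) (by rw [hκdef]; ring) x ?_
    rw [mem_closedBall_iff_norm] at hx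
    calc ‖x - xs‖ = ‖(x - xhat) + (xhat - xs)‖ := by rw [sub_add_sub_cancel]
      _ ≤ κ + e := (norm_add_le _ _).trans (add_le_add hx hest)
  have hΛ0 : 0 < Λ := by
    by_contra! h
    have : δ / (10 * m) * Λ ≤ 0 := mul_nonpos_of_nonneg_of_nonpos (by positivity) h
    have : 0 < c0 * σ := mul_pos hc0 hσ
    linarith
  have hline : ∀ (x z : EuclideanSpace ℝ (Fin n)) (t : ℝ) (i : Fin m),
      x + t • z - a i = (x - a i) + t • z := fun x z t i => by abel
  have D1 : ∀ (x z : EuclideanSpace ℝ (Fin n)) (t : ℝ), (∀ i, x + t • z - a i ≠ 0) →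
      HasDerivAt (fun s : ℝ => f (x + s • z))
        (∑ i, termD (‖xs - a i‖ + w i) z (x + t • z - a i)) t := by
    intro x z t h
    subst hf
    simp only [hline] at h ⊢
    exact HasDerivAt.fun_sum fun i _ => hasDerivAt_term _ _ _ _ (h i)
  have D2 : ∀ (x z : EuclideanSpace ℝ (Fin n)) (t : ℝ), (∀ i, x + t • z - a i ≠ 0) →
      HasDerivAt (fun s : ℝ => ∑ i, termD (‖xs - a i‖ + w i) z (x + s • z - a i))
        (∑ i, termDD (‖xs - a i‖ + w i) z (x + t • z - a i)) t := by
    intro x z t h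
    simp only [hline] at h ⊢
    exact HasDerivAt.fun_sum fun i _ => hasDerivAt_termD _ _ _ _ (h i)
  refine ⟨fun ε hε => ?_, Λ / 2, by positivity, ?_⟩
  · set x := xhat + ε with hx
    obtain ⟨hne, hlow⟩ := key x (by rw [mem_closedBall_iff_norm, hx]; simpa using hε)
    have hcd : ContDiffAt ℝ 2 f x := by
      rw [hf]
      refine ContDiffAt.sum fun i _ => ?_
      exact (((contDiffAt_id.sub contDiffAt_const).norm ℝ (hne i)).sub contDiffAt_const).pow 2
    refine ⟨hcd, fun z hz => ?_⟩
    have hx0 : x + (0 : ℝ) • z = x := by simp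
    have hev : ∀ᶠ t in nhds (0 : ℝ), ∀ i, x + t • z - a i ≠ 0 := by
      rw [Filter.eventually_all]
      intro i
      have hc : ContinuousAt (fun t : ℝ => x + t • z - a i) 0 := by fun_prop
      exact hc.eventually_ne (by rw [hx0]; exact hne i)
    rw [iteratedFDeriv_two_eq_of_line f x z hcd _ _ (hev.mono fun t ht => D1 x z t ht)
      (D2 x z 0 (by rw [hx0]; exact hne)), hx0]
    have := norm_pos_iff.2 hz
    exact lt_of_lt_of_le (by positivity) (hlow z)
  · exact strongConvexOn_of_line f _ (convex_closedBall _ _) _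
      (fun z y => ∑ i, termD (‖xs - a i‖ + w i) z (y - a i))
      (fun z y => ∑ i, termDD (‖xs - a i‖ + w i) z (y - a i))
      (fun x z t h => D1 x z t (key _ h).1) (fun x z t h => D2 x z t (key _ h).1)
      (fun x hx z => (key x hx).2 z)
end

section
/- Let n ≥ 1 and m ≥ 1. Fix sensor positions a_1,…,a_m ∈ ℝⁿ, a true source position x⋆ ∈ ℝⁿ, constants c₀, σ, δ > 0, and a noise vector w ∈ ℝᵐ with Σ_{i=1}^m |w_i| ≤ c₀·m·σ and |w_i| ≤ ‖x⋆ − a_i‖/2 for all i. Let r_i = ‖x⋆ − a_i‖ + w_i and f(x) = Σ_{i=1}^m (‖x − a_i‖ − r_i)². Let x̂ ∈ ℝⁿ satisfy ‖x⋆ − a_i‖ > ‖x̂ − x⋆‖ + δ for all i, and define Λ := min over unit vectors z ∈ ℝⁿ of Σ_{i=1}^m ⟨z, (x⋆ − a_i)/‖x⋆ − a_i‖⟩². Then for every ε ∈ ℝⁿ with ‖ε‖ ≤ δ/10, f is twice continuously differentiable at x̂ + ε and for every unit vector z ∈ ℝⁿ, the second-derivative quadratic form of f at x̂ + ε evaluated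 at (z, z) is at least Λ/2 − (5m/δ)·(‖x̂ − x⋆‖ + ‖ε‖) − (4c₀·m·σ)/δ. -/
/-! Write `u = x - aᵢ` for `x = x̂ + ε`, `ρ = ‖u‖`, `p = x⋆ - aᵢ`, `d = ‖p‖` and
`r = d + wᵢ`. Away from `aᵢ` the `i`-th summand of the loss is smooth, and its second derivative
along a unit vector `z` is `2 (s² + (1 - r/ρ)(1 - s²))` with `s = ⟪z, u/ρ⟫`
(`fderiv_fderiv_loss`).

Put `t = ⟪z, p/d⟫` and `h = ‖x̂ - x⋆‖ + ‖ε‖ ≥ ‖u - p‖`.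
* Since `ρ ≥ 9δ/10` and `r - ρ ≤ h + |wᵢ|`, the second part is at least
  `-(20/9) (h + |wᵢ|) / δ`.
* Normalization is Lipschitz away from the origin, so `|t - s| ≤ 2h/δ`, and since `|s|, |t| ≤ 1`,
  `t²/2 - 2s² ≤ (t - s)(t + s)/2 ≤ 2h/δ`.

So each summand contributes at least `t²/2 - 5h/δ - 4|wᵢ|/δ` (`term_bound`); it remains to sum
over `i` and to use `∑ t² ≥ Λ`. -/

open scoped RealInnerProductSpace

section

variable {E : Type*} [NormedAddCommGroup E] [InnerProductSpace ℝ E]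

theorem hasFDerivAt_norm_sub (a y : E) (h : y ≠ a) :
    HasFDerivAt (fun x => ‖x - a‖) (‖y - a‖⁻¹ • innerSL ℝ (y - a)) y := by
  have hn : ‖y - a‖ ≠ 0 := norm_ne_zero_iff.mpr (sub_ne_zero.mpr h)
  have h1 := (((hasFDerivAt_id (𝕜 := ℝ) y).sub_const a).norm_sq).sqrt (pow_ne_zero 2 hn)
  simp only [id, Real.sqrt_sq (norm_nonneg _)] at h1
  refine h1.congr_fderiv ?_
  ext v
  simp
  field_simp

theorem hasFDerivAt_term (a y : E) (r : ℝ) (h : y ≠ a) :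
    HasFDerivAt (fun x => (‖x - a‖ - r) ^ 2)
      ((2 * (1 - r * ‖y - a‖⁻¹)) • innerSL ℝ (y - a)) y := by
  have hn : ‖y - a‖ ≠ 0 := norm_ne_zero_iff.mpr (sub_ne_zero.mpr h)
  refine (((hasFDerivAt_norm_sub a y h).sub_const r).pow 2).congr_fderiv ?_
  ext v
  simp
  field_simp

/-- Derivative along `z` of the directional derivative along `z` of one summand of the loss. -/
theorem hasFDerivAt_dir (a y z : E) (r : ℝ) (h : y ≠ a) :
    ∃ L : E →L[ℝ] ℝ, HasFDerivAt (fun x => (2 * (1 - r * ‖x - a‖⁻¹)) * inner ℝ (x - a) z) L y ∧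
      L z = 2 * (1 - r * ‖y - a‖⁻¹) * ‖z‖ ^ 2
        + 2 * (r * ‖y - a‖⁻¹) * (inner ℝ z (‖y - a‖⁻¹ • (y - a))) ^ 2 := by
  have hn : ‖y - a‖ ≠ 0 := norm_ne_zero_iff.mpr (sub_ne_zero.mpr h)
  have h1 := (hasDerivAt_inv hn).comp_hasFDerivAt y (hasFDerivAt_norm_sub a y h)
  have h2 := ((h1.const_mul r).const_sub 1).const_mul 2
  have h3 := ((hasFDerivAt_id (𝕜 := ℝ) y).sub_const a).inner ℝ (hasFDerivAt_const z y)
  refine ⟨_, h2.mul h3, ?_⟩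
  simp [inner_smul_right, real_inner_comm z, -map_sub]
  field_simp

theorem contDiffAt_term (a y : E) (r : ℝ) (h : y ≠ a) :
    ContDiffAt ℝ 2 (fun x => (‖x - a‖ - r) ^ 2) y :=
  (((contDiffAt_id.sub contDiffAt_const).norm ℝ (sub_ne_zero.mpr h)).sub contDiffAt_const).pow 2

theorem contDiffAt_loss {m : ℕ} (a : Fin m → E) (r : Fin m → ℝ) (y : E) (h : ∀ i, y ≠ a i) :
    ContDiffAt ℝ 2 (fun x => ∑ i, (‖x - a i‖ - r i) ^ 2) y :=
  ContDiffAt.sum fun i _ => contDiffAt_term (a i) y (r i) (h i)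

/-- The Hessian quadratic form of the range-based least-squares loss, away from the sensors. -/
theorem fderiv_fderiv_loss {m : ℕ} (a : Fin m → E) (r : Fin m → ℝ) (y z : E)
    (h : ∀ i, y ≠ a i) :
    iteratedFDeriv ℝ 2 (fun x => ∑ i, (‖x - a i‖ - r i) ^ 2) y ![z, z] =
      ∑ i, (2 * (1 - r i * ‖y - a i‖⁻¹) * ‖z‖ ^ 2
        + 2 * (r i * ‖y - a i‖⁻¹) * (inner ℝ z (‖y - a i‖⁻¹ • (y - a i))) ^ 2) := by
  set F : E → ℝ := fun x => ∑ i, (‖x - a i‖ - r i) ^ 2 with hF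
  rw [iteratedFDeriv_two_apply]
  have hd : DifferentiableAt ℝ (fderiv ℝ F) y :=
    ((contDiffAt_loss a r y h).fderiv_right (m := 1) (by norm_num)).differentiableAt (by norm_num)
  -- Evaluation at the fixed vector `z` turns the second derivative into that of a scalar function.
  have h1 : HasFDerivAt (fun x => fderiv ℝ F x z)
      ((ContinuousLinearMap.apply ℝ ℝ z).comp (fderiv ℝ (fderiv ℝ F) y)) y :=
    (ContinuousLinearMap.apply ℝ ℝ z).hasFDerivAt.comp y hd.hasFDerivAt
  have hev : ∀ᶠ x in nhds y, ∀ i, x ≠ a i :=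
    Filter.eventually_all.mpr fun i => isOpen_ne.mem_nhds (h i)
  choose L hL hLz using fun i => hasFDerivAt_dir (a i) y z (r i) (h i)
  have h2 : HasFDerivAt (fun x => fderiv ℝ F x z) (∑ i, L i) y := by
    refine (HasFDerivAt.fun_sum fun i _ => hL i).congr_of_eventuallyEq ?_
    filter_upwards [hev] with x hx
    have := HasFDerivAt.fun_sum (u := Finset.univ)
      fun i _ => hasFDerivAt_term (a i) x (r i) (hx i)
    rw [hF, this.fderiv]
    simp [-map_sub]
  have h3 := congrArg (fun M : E →L[ℝ] ℝ => M z) (h1.unique h2)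
  simp at h3
  simp [h3, hLz]

/-- Normalization is Lipschitz away from the origin. -/
theorem norm_normalize_sub_le (u p : E) (hu : u ≠ 0) (hp : p ≠ 0) :
    ‖‖p‖⁻¹ • p - ‖u‖⁻¹ • u‖ ≤ 2 * ‖u - p‖ / ‖p‖ := by
  have h1 : 0 < ‖u‖ := norm_pos_iff.mpr hu
  have h2 : 0 < ‖p‖ := norm_pos_iff.mpr hp
  have e : ‖p‖⁻¹ • p - ‖u‖⁻¹ • u = ‖p‖⁻¹ • (p - u) + (‖p‖⁻¹ - ‖u‖⁻¹) • u := by module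
  have h3 : ‖(‖p‖⁻¹ - ‖u‖⁻¹) • u‖ = |‖u‖ - ‖p‖| / ‖p‖ := by
    have : ‖p‖⁻¹ - ‖u‖⁻¹ = (‖u‖ - ‖p‖) / (‖p‖ * ‖u‖) := by field_simp
    rw [norm_smul, this, Real.norm_eq_abs, abs_div, abs_of_pos (mul_pos h2 h1)]
    field_simp
  have h4 : ‖‖p‖⁻¹ • (p - u)‖ = ‖u - p‖ / ‖p‖ := by
    rw [norm_smul, norm_inv, norm_norm, norm_sub_rev]; field_simp
  rw [e]
  refine (norm_add_le _ _).trans ?_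
  rw [h3, h4, ← add_div]
  gcongr
  linarith [abs_norm_sub_norm_le u p]

theorem abs_inner_normalize_le (z u : E) (hz : ‖z‖ = 1) :
    |inner ℝ z (‖u‖⁻¹ • u)| ≤ 1 := by
  refine (abs_real_inner_le_norm _ _).trans ?_
  rw [hz, norm_smul, norm_inv, norm_norm, one_mul]
  exact inv_mul_le_one

/-- Lower bound for the contribution of one sensor to the Hessian; `h` bounds the displacement
between the evaluation point and the true source. -/
theorem term_bound (u p z : E) (w δ h : ℝ) (hδ : 0 < δ) (hz : ‖z‖ = 1)
    (hup : ‖u - p‖ ≤ h) (hp : δ ≤ ‖p‖) (hu : 9 / 10 * δ ≤ ‖u‖) :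
    (inner ℝ z (‖p‖⁻¹ • p)) ^ 2 / 2 - 5 * h / δ - 4 * |w| / δ ≤
      2 * (1 - (‖p‖ + w) * ‖u‖⁻¹) * ‖z‖ ^ 2
        + 2 * ((‖p‖ + w) * ‖u‖⁻¹) * (inner ℝ z (‖u‖⁻¹ • u)) ^ 2 := by
  have hp0 : 0 < ‖p‖ := by linarith
  have hu0 : 0 < ‖u‖ := by linarith
  have hh : 0 ≤ h := (norm_nonneg _).trans hup
  have hs := abs_le.mp (abs_inner_normalize_le z u hz)
  have ht := abs_le.mp (abs_inner_normalize_le z p hz)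
  have hts : |inner ℝ z (‖p‖⁻¹ • p) - inner ℝ z (‖u‖⁻¹ • u)| ≤ 2 * h / δ := by
    rw [← inner_sub_right]
    refine (abs_real_inner_le_norm _ _).trans ?_
    rw [hz, one_mul]
    refine (norm_normalize_sub_le u p (norm_pos_iff.mp hu0) (norm_pos_iff.mp hp0)).trans ?_
    gcongr
  have hr : (‖p‖ + w) * ‖u‖⁻¹ - 1 ≤ 10 / 9 * ((h + |w|) / δ) := by
    have e : (‖p‖ + w) * ‖u‖⁻¹ - 1 = (‖p‖ + w - ‖u‖) / ‖u‖ := by field_simp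
    have e2 : 10 / 9 * ((h + |w|) / δ) = (h + |w|) / (9 / 10 * δ) := by field_simp
    have h5 : ‖p‖ + w - ‖u‖ ≤ h + |w| := by
      linarith [le_abs_self w, norm_sub_norm_le p u, norm_sub_rev u p]
    rw [e, e2]
    gcongr
  generalize inner ℝ z (‖u‖⁻¹ • u) = s at *
  generalize inner ℝ z (‖p‖⁻¹ • p) = t at *
  generalize (‖p‖ + w) * ‖u‖⁻¹ = q at *
  have hsq : s ^ 2 ≤ 1 := by nlinarith
  have ha : t ^ 2 / 2 - s ^ 2 / 2 ≤ 2 * h / δ := by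
    have h6 : (t - s) * (t + s) ≤ |t - s| * 2 := by
      refine (le_abs_self _).trans ?_
      rw [abs_mul]
      gcongr
      exact abs_le.mpr ⟨by linarith, by linarith⟩
    nlinarith
  have hA : 0 ≤ h / δ := by positivity
  have hB : 0 ≤ |w| / δ := by positivity
  have hb : (q - 1) * (1 - s ^ 2) ≤ 10 / 9 * ((h + |w|) / δ) := by
    refine (mul_le_mul_of_nonneg_right hr (by linarith)).trans ?_
    exact mul_le_of_le_one_right (by positivity) (by nlinarith)
  rw [hz]
  rw [add_div] at hb
  rw [mul_div_assoc] at ha ⊢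
  rw [mul_div_assoc]
  nlinarith [sq_nonneg s]

end

/-- Hessian lower bound for the TOA least-squares loss: if `Σ_i |w_i| ≤ c₀mσ`,
`|w_i| ≤ ‖x⋆ − a_i‖/2`, and `‖x⋆ − a_i‖ > ‖x̂ − x⋆‖ + δ` for all `i`, then for every
`ε` with `‖ε‖ ≤ δ/10`, `f` is twice continuously differentiable at `x̂ + ε` and for
every unit vector `z`, the Hessian quadratic form of `f` at `x̂ + ε` in direction `z`
is at least `Λ/2 − (5m/δ)(‖x̂ − x⋆‖ + ‖ε‖) − 4c₀mσ/δ`, where `Λ` is the minimum over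
unit vectors `z` of `Σ_i ⟨z, (x⋆ − a_i)/‖x⋆ − a_i‖⟩²`. -/
theorem stmt2 (n m : ℕ) (hn : 1 ≤ n) (hm : 1 ≤ m)
    (a : Fin m → EuclideanSpace ℝ (Fin n)) (xs : EuclideanSpace ℝ (Fin n))
    (c0 σ δ : ℝ) (hc0 : 0 < c0) (hσ : 0 < σ) (hδ : 0 < δ)
    (w : Fin m → ℝ)
    (hw : ∑ i, |w i| ≤ c0 * m * σ)
    (hwi : ∀ i, |w i| ≤ ‖xs - a i‖ / 2)
    (f : EuclideanSpace ℝ (Fin n) → ℝ)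
    (hf : f = fun x => ∑ i, (‖x - a i‖ - (‖xs - a i‖ + w i)) ^ 2)
    (xhat : EuclideanSpace ℝ (Fin n))
    (hfar : ∀ i, ‖xhat - xs‖ + δ < ‖xs - a i‖)
    (Λ : ℝ)
    (hΛ : IsLeast {t : ℝ | ∃ z : EuclideanSpace ℝ (Fin n), ‖z‖ = 1 ∧
      t = ∑ i, ⟪z, ‖xs - a i‖⁻¹ • (xs - a i)⟫ ^ 2} Λ) :
    ∀ ε : EuclideanSpace ℝ (Fin n), ‖ε‖ ≤ δ / 10 →
      ContDiffAt ℝ 2 f (xhat + ε) ∧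
      ∀ z : EuclideanSpace ℝ (Fin n), ‖z‖ = 1 →
        Λ / 2 - 5 * m / δ * (‖xhat - xs‖ + ‖ε‖) - 4 * c0 * m * σ / δ ≤
          iteratedFDeriv ℝ 2 f (xhat + ε) ![z, z] := by
  intro ε hε
  have hx : ∀ i, 9 / 10 * δ ≤ ‖xhat + ε - a i‖ := fun i => by
    have e : xs - a i = (xhat + ε - a i) - (xhat - xs) - ε := by abel
    have h1 : ‖xs - a i‖ ≤ ‖xhat + ε - a i‖ + ‖xhat - xs‖ + ‖ε‖ := by
      rw [e]
      exact (norm_sub_le _ _).trans (by gcongr; exact norm_sub_le _ _)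
    linarith [hfar i]
  have hne : ∀ i, xhat + ε ≠ a i := fun i h => by
    have := hx i
    rw [h, sub_self, norm_zero] at this
    linarith
  subst hf
  refine ⟨contDiffAt_loss a _ _ hne, fun z hz => ?_⟩
  rw [fderiv_fderiv_loss a (fun i => ‖xs - a i‖ + w i) _ z hne]
  have hsum := Finset.sum_le_sum fun i (_ : i ∈ Finset.univ) =>
    term_bound (xhat + ε - a i) (xs - a i) z (w i) δ (‖xhat - xs‖ + ‖ε‖) hδ hz
      (by
        have e : xhat + ε - a i - (xs - a i) = (xhat - xs) + ε := by abel
        rw [e]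
        exact norm_add_le _ _)
      (by linarith [hfar i, norm_nonneg (xhat - xs)]) (hx i)
  refine le_trans ?_ hsum
  have hL := hΛ.2 ⟨z, hz, rfl⟩
  have hW : 4 * (∑ i, |w i|) / δ ≤ 4 * (c0 * m * σ) / δ := by gcongr
  have hW' : ∑ i, 4 * |w i| / δ = 4 * (∑ i, |w i|) / δ := by
    rw [Finset.mul_sum, Finset.sum_div]
  rw [Finset.sum_sub_distrib, Finset.sum_sub_distrib, hW', ← Finset.sum_div, Finset.sum_const,
    Finset.card_univ, Fintype.card_fin, nsmul_eq_mul]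
  have e1 : (m : ℝ) * (5 * (‖xhat - xs‖ + ‖ε‖) / δ) = 5 * m / δ * (‖xhat - xs‖ + ‖ε‖) := by ring
  have e2 : 4 * (c0 * m * σ) / δ = 4 * c0 * m * σ / δ := by ring
  linarith
end

section
/- Let E be a finite-dimensional real inner product space and let u, v ∈ E be linearly independent. Then the minimum over all unit vectors z ∈ E of the quantity ⟨u, z⟩² − ⟨v, z⟩² equals (‖u‖² − ‖v‖² − ‖u − v‖·‖u + v‖)/2. Equivalently, the smallest eigenvalue of the symmetric operator uuᵀ − vvᵀ equals (‖u‖² − ‖v‖² − ‖u − v‖·‖u + v‖)/2. -/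
/-!
Put `p = u - v` and `q = u + v`. Then `⟪u, z⟫² - ⟪v, z⟫² = ⟪p, z⟫ ⟪q, z⟫` and
`‖u‖² - ‖v‖² = ⟪p, q⟫`, so the claim is that the minimum of `⟪p, z⟫ ⟪q, z⟫` over unit vectors is
`(⟪p, q⟫ - ‖p‖ ‖q‖) / 2`. With `w = ‖q‖ p - ‖p‖ q`, one has `‖w‖² = 2 ‖p‖ ‖q‖ (‖p‖ ‖q‖ - ⟪p, q⟫)`.
The lower bound follows from the polarization
`4 ‖p‖ ‖q‖ ⟪p, z⟫ ⟪q, z⟫ = ⟪‖q‖ p + ‖p‖ q, z⟫² - ⟪w, z⟫²` and Cauchy–Schwarz for `⟪w, z⟫`.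
Since `‖q‖ p + ‖p‖ q` is orthogonal to `w`, equality holds at `z = w / ‖w‖`; linear independence
guarantees `w ≠ 0`.
-/

open scoped RealInnerProductSpace

section

variable {E : Type*} [NormedAddCommGroup E] [InnerProductSpace ℝ E]

lemma norm_sq_weighted_sub (p q : E) :
    ‖‖q‖ • p - ‖p‖ • q‖ ^ 2 = 2 * (‖p‖ * ‖q‖) * (‖p‖ * ‖q‖ - ⟪p, q⟫) := by
  rw [norm_sub_sq_real, norm_smul, norm_smul, real_inner_smul_left, real_inner_smul_right,
    norm_norm, norm_norm]
  ring

lemma le_inner_mul_inner {p q z : E} (hp : p ≠ 0) (hq : q ≠ 0) (hz : ‖z‖ = 1) :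
    (⟪p, q⟫ - ‖p‖ * ‖q‖) / 2 ≤ ⟪p, z⟫ * ⟪q, z⟫ := by
  have hPQ : 0 < ‖p‖ * ‖q‖ := mul_pos (norm_pos_iff.2 hp) (norm_pos_iff.2 hq)
  have hcs : ⟪‖q‖ • p - ‖p‖ • q, z⟫ ^ 2 ≤ ‖‖q‖ • p - ‖p‖ • q‖ ^ 2 := by
    have h := abs_real_inner_le_norm (‖q‖ • p - ‖p‖ • q) z
    rw [hz, mul_one] at h
    exact sq_le_sq' (abs_le.1 h).1 (abs_le.1 h).2
  rw [norm_sq_weighted_sub, inner_sub_left, real_inner_smul_left, real_inner_smul_left] at hcs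
  refine le_of_mul_le_mul_left ?_ hPQ
  nlinarith [sq_nonneg (‖q‖ * ⟪p, z⟫ + ‖p‖ * ⟪q, z⟫)]

lemma exists_inner_mul_inner_eq {p q : E} (hw : ‖q‖ • p - ‖p‖ • q ≠ 0) :
    ∃ z : E, ‖z‖ = 1 ∧ (⟪p, q⟫ - ‖p‖ * ‖q‖) / 2 = ⟪p, z⟫ * ⟪q, z⟫ := by
  have hsq := norm_sq_weighted_sub p q
  have h1 : ⟪p, ‖q‖ • p - ‖p‖ • q⟫ = ‖p‖ * (‖p‖ * ‖q‖ - ⟪p, q⟫) := by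
    rw [inner_sub_right, real_inner_smul_right, real_inner_smul_right,
      real_inner_self_eq_norm_sq]
    ring
  have h2 : ⟪q, ‖q‖ • p - ‖p‖ • q⟫ = -(‖q‖ * (‖p‖ * ‖q‖ - ⟪p, q⟫)) := by
    rw [inner_sub_right, real_inner_smul_right, real_inner_smul_right,
      real_inner_self_eq_norm_sq, real_inner_comm]
    ring
  set w := ‖q‖ • p - ‖p‖ • q
  have hw' : ‖w‖ ≠ 0 := norm_ne_zero_iff.2 hw
  refine ⟨‖w‖⁻¹ • w, ?_, ?_⟩
  · rw [norm_smul, norm_inv, norm_norm, inv_mul_cancel₀ hw']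
  · rw [real_inner_smul_right, real_inner_smul_right, h1, h2]
    field_simp
    rw [hsq]
    ring

end

/-- Let `E` be a finite-dimensional real inner product space and `u, v ∈ E` linearly
independent. Then the minimum over unit vectors `z` of `⟨u,z⟩² − ⟨v,z⟩²` (i.e. the
smallest eigenvalue of `uuᵀ − vvᵀ`) equals `(‖u‖² − ‖v‖² − ‖u−v‖·‖u+v‖)/2`. -/
theorem stmt4 {E : Type*} [NormedAddCommGroup E] [InnerProductSpace ℝ E]
    [FiniteDimensional ℝ E] (u v : E) (huv : LinearIndependent ℝ ![u, v]) :
    IsLeast {r : ℝ | ∃ z : E, ‖z‖ = 1 ∧ r = ⟪u, z⟫ ^ 2 - ⟪v, z⟫ ^ 2}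
      ((‖u‖ ^ 2 - ‖v‖ ^ 2 - ‖u - v‖ * ‖u + v‖) / 2) := by
  rw [LinearIndependent.pair_iff] at huv
  have hp : u - v ≠ 0 := fun h => by
    simpa using (huv 1 (-1) (by rw [← h]; module)).1
  have hq : u + v ≠ 0 := fun h => by
    simpa using (huv 1 1 (by rw [← h]; module)).1
  have hw : ‖u + v‖ • (u - v) - ‖u - v‖ • (u + v) ≠ 0 := fun h => by
    -- The coefficient of `v` in this vector is `-(‖u + v‖ + ‖u - v‖) < 0`.
    have := (huv (‖u + v‖ - ‖u - v‖) (-(‖u + v‖ + ‖u - v‖)) (by rw [← h]; module)).2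
    linarith [norm_pos_iff.2 hp, norm_pos_iff.2 hq]
  have hc : ‖u‖ ^ 2 - ‖v‖ ^ 2 = ⟪u - v, u + v⟫ := by
    rw [inner_sub_left, inner_add_right, inner_add_right, real_inner_self_eq_norm_sq,
      real_inner_self_eq_norm_sq, real_inner_comm u v]
    ring
  have hf (z : E) : ⟪u, z⟫ ^ 2 - ⟪v, z⟫ ^ 2 = ⟪u - v, z⟫ * ⟪u + v, z⟫ := by
    rw [inner_sub_left, inner_add_left]
    ring
  simp only [hc, hf]
  refine ⟨exists_inner_mul_inner_eq hw, ?_⟩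
  rintro _ ⟨z, hz, rfl⟩
  exact le_inner_mul_inner hp hq hz
end

section
/- Let E be a normed real vector space, let T ≥ 1, let ρ ∈ (0, 1), and let x_0, x_1, …, x_T ∈ E and y_1, …, y_T ∈ E be such that ‖x_t − y_t‖ ≤ ρ·‖x_{t−1} − y_t‖ for all t = 1,…,T. Then Σ_{t=1}^T ‖x_t − y_t‖ ≤ (ρ/(1 − ρ))·( ‖x_0 − y_1‖ + Σ_{t=1}^{T−1} ‖y_t − y_{t+1}‖ ). -/
/-!
Write `e t = ‖x t - y t‖` and `d t = ‖y t - y (t + 1)‖`. The triangle inequality turns the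
contraction into the scalar recursion `e (t + 1) ≤ ρ * (e t + d t)`, with `e 1 ≤ ρ * ‖x 0 - y 1‖`.
Summing it gives `∑ e + ρ * e T ≤ ρ * ∑ e + ρ * (‖x 0 - y 1‖ + ∑ d)`, which is
`tracking_potential`; dropping `ρ * e T ≥ 0` and dividing by `1 - ρ > 0` yields the bound.
-/

/-- Strengthening of the theorem (multiplied through by `1 - ρ`) that is inductive in the horizon:
the extra term `ρ * ‖x (n + 1) - y (n + 1)‖` on the left absorbs the carried-over error when the
contraction is combined with
`‖x (n + 1) - y (n + 2)‖ ≤ ‖x (n + 1) - y (n + 1)‖ + ‖y (n + 1) - y (n + 2)‖`. -/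
theorem tracking_potential {E : Type*} [NormedAddCommGroup E] (ρ : ℝ) (hρ0 : 0 < ρ)
    (x y : ℕ → E) (n : ℕ)
    (h : ∀ t ∈ Finset.Icc 1 (n + 1), ‖x t - y t‖ ≤ ρ * ‖x (t - 1) - y t‖) :
    (1 - ρ) * ∑ t ∈ Finset.Icc 1 (n + 1), ‖x t - y t‖ + ρ * ‖x (n + 1) - y (n + 1)‖ ≤
      ρ * (‖x 0 - y 1‖ + ∑ t ∈ Finset.Icc 1 n, ‖y t - y (t + 1)‖) := by
  induction n with
  | zero =>
    have h1 := h 1 (by simp)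
    simp only [Nat.sub_self] at h1
    simp only [zero_add, Finset.Icc_self, Finset.sum_singleton, Finset.Icc_eq_empty_of_lt
      Nat.zero_lt_one, Finset.sum_empty, add_zero]
    linarith
  | succ n ih =>
    have ih' := ih fun t ht => h t (Finset.Icc_subset_Icc_right (by omega) ht)
    have hstep := h (n + 1 + 1) (by simp)
    rw [Nat.add_sub_cancel] at hstep
    have htri := mul_le_mul_of_nonneg_left
      (norm_sub_le_norm_sub_add_norm_sub (x (n + 1)) (y (n + 1)) (y (n + 1 + 1))) hρ0.le
    rw [Finset.sum_Icc_succ_top (by omega : 1 ≤ n + 1 + 1),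
      Finset.sum_Icc_succ_top (by omega : 1 ≤ n + 1) (fun t => ‖y t - y (t + 1)‖)]
    linarith

/-- If `‖x_t − y_t‖ ≤ ρ‖x_{t−1} − y_t‖` for `t = 1,…,T` with `ρ ∈ (0,1)`, then
`Σ_{t=1}^T ‖x_t − y_t‖ ≤ (ρ/(1−ρ))·(‖x_0 − y_1‖ + Σ_{t=1}^{T−1} ‖y_t − y_{t+1}‖)`. -/
theorem stmt10 {E : Type*} [NormedAddCommGroup E] [NormedSpace ℝ E]
    (T : ℕ) (hT : 1 ≤ T) (ρ : ℝ) (hρ0 : 0 < ρ) (hρ1 : ρ < 1)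
    (x y : ℕ → E)
    (h : ∀ t ∈ Finset.Icc 1 T, ‖x t - y t‖ ≤ ρ * ‖x (t - 1) - y t‖) :
    ∑ t ∈ Finset.Icc 1 T, ‖x t - y t‖ ≤
      ρ / (1 - ρ) * (‖x 0 - y 1‖ + ∑ t ∈ Finset.Icc 1 (T - 1), ‖y t - y (t + 1)‖) := by
  obtain ⟨n, rfl⟩ := Nat.exists_eq_add_of_le' hT
  have key := tracking_potential ρ hρ0 x y n h
  have hlast : 0 ≤ ρ * ‖x (n + 1) - y (n + 1)‖ := by positivity
  rw [Nat.add_sub_cancel, div_mul_eq_mul_div, le_div_iff₀ (by linarith)]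
  linarith
end

section
/- Let n ≥ 1, T ≥ 1, let κ > 0, ρ ∈ (0, 1), and E ≥ 0. Let x⋆_1,…,x⋆_T ∈ ℝⁿ be true target positions, x̂_1,…,x̂_T ∈ ℝⁿ be per-time-step estimates, and x_0, x_1, …, x_T ∈ ℝⁿ be iterates. Assume: (i) ‖x̂_t − x⋆_t‖ ≤ E for all t = 1,…,T; (ii) for every t = 1,…,T, if ‖x_{t−1} − x̂_t‖ ≤ κ then ‖x_t − x̂_t‖ ≤ ρ·‖x_{t−1} − x̂_t‖; (iii) κ ≥ (2E + v)/(1 − ρ), where v := max_{t=1,…,T−1} ‖x⋆_{t+1} − x⋆_t‖ (take v = 0 if T = 1); and (iv) ‖x_0 − x⋆_1‖ ≤ E. Then for every t = 0, 1, …, T−1, the iterate x_t lies in the closed ball B(x̂_{t+1}, κ), i.e., ‖x_t − x̂_{t+1}‖ ≤ κ. -/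
/-!
The radius condition on `κ` says `ρ * κ + 2 * E + v ≤ κ`, which makes the claim an induction on `t`.
At `t = 0` the point `x 0` is within `2 * E` of `xhat 1`, passing through `xs 1`. If `x t` lies in
the ball around `xhat (t + 1)`, contraction puts `x (t + 1)` within `ρ * κ` of `xhat (t + 1)`, and
`xhat (t + 2)` is at distance at most `E + v + E` from `xhat (t + 1)`, passing through `xs (t + 1)`
and `xs (t + 2)`.
-/

/-- Invariant of OGD: under the estimation-error bound, the one-step contraction
property, `κ ≥ (2E + v)/(1 − ρ)` with `v` the maximum per-step variation of the
true target (`v = 0` if `T = 1`), and a good initial point, every iterate `x_t`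
(`t = 0,…,T−1`) lies in the closed ball `B(x̂_{t+1}, κ)`. -/
theorem stmt11 (n T : ℕ) (hn : 1 ≤ n) (hT : 1 ≤ T)
    (κ ρ E v : ℝ) (hκpos : 0 < κ) (hρ0 : 0 < ρ) (hρ1 : ρ < 1) (hE : 0 ≤ E)
    (xs xhat x : ℕ → EuclideanSpace ℝ (Fin n))
    (h1 : ∀ t ∈ Finset.Icc 1 T, ‖xhat t - xs t‖ ≤ E)
    (h2 : ∀ t ∈ Finset.Icc 1 T,
      ‖x (t - 1) - xhat t‖ ≤ κ → ‖x t - xhat t‖ ≤ ρ * ‖x (t - 1) - xhat t‖)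
    (hv : v = if h : 2 ≤ T then
        (Finset.Icc 1 (T - 1)).sup' (Finset.nonempty_Icc.mpr (by omega))
          (fun t => ‖xs (t + 1) - xs t‖)
      else 0)
    (hκ : (2 * E + v) / (1 - ρ) ≤ κ)
    (h0 : ‖x 0 - xs 1‖ ≤ E) :
    ∀ t < T, x t ∈ Metric.closedBall (xhat (t + 1)) κ := by
  have hvar : ∀ t ∈ Finset.Icc 1 (T - 1), ‖xs (t + 1) - xs t‖ ≤ v := by
    intro t ht
    have hT2 : 2 ≤ T := by
      have := Finset.mem_Icc.mp ht
      omega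
    rw [hv, dif_pos hT2]
    exact Finset.le_sup' (fun t => ‖xs (t + 1) - xs t‖) ht
  have hv0 : 0 ≤ v := by
    by_cases hT2 : 2 ≤ T
    · exact (norm_nonneg _).trans (hvar 1 (Finset.mem_Icc.mpr ⟨le_rfl, by omega⟩))
    · rw [hv, dif_neg hT2]
  have hκ' : 2 * E + v ≤ κ * (1 - ρ) := (div_le_iff₀ (by linarith)).mp hκ
  have hρκ : 0 < ρ * κ := mul_pos hρ0 hκpos
  simp only [Metric.mem_closedBall, ← dist_eq_norm] at *
  intro t
  induction t with
  | zero =>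
    intro _
    have h3 := h1 1 (Finset.mem_Icc.mpr ⟨le_rfl, hT⟩)
    have h4 := dist_triangle_right (x 0) (xhat 1) (xs 1)
    rw [zero_add]
    linarith
  | succ t ih =>
    intro ht
    have hball := ih (by omega)
    have hmem : t + 1 ∈ Finset.Icc 1 T := Finset.mem_Icc.mpr ⟨by omega, by omega⟩
    have hcontr : dist (x (t + 1)) (xhat (t + 1)) ≤ ρ * dist (x t) (xhat (t + 1)) :=
      h2 (t + 1) hmem hball
    have hρ : ρ * dist (x t) (xhat (t + 1)) ≤ ρ * κ := mul_le_mul_of_nonneg_left hball hρ0.le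
    have hE1 := h1 (t + 1) hmem
    have hE2 := h1 (t + 1 + 1) (Finset.mem_Icc.mpr ⟨by omega, by omega⟩)
    have hdrift := hvar (t + 1) (Finset.mem_Icc.mpr ⟨by omega, by omega⟩)
    rw [dist_comm] at hdrift hE2
    have h3 := dist_triangle (x (t + 1)) (xhat (t + 1)) (xhat (t + 1 + 1))
    have h4 := dist_triangle4 (xhat (t + 1)) (xs (t + 1)) (xs (t + 1 + 1)) (xhat (t + 1 + 1))
    linarith
end

section
/- Let n ≥ 1, T ≥ 1, ρ ∈ (0, 1), and let E_1,…,E_T ≥ 0. Let x⋆_1,…,x⋆_T ∈ ℝⁿ be true target positions, x̂_1,…,x̂_T ∈ ℝⁿ be per-time-step estimates, and x_0, x_1, …, x_T ∈ ℝⁿ be iterates. Assume: (i) ‖x̂_t − x⋆_t‖ ≤ E_t for all t = 1,…,T, and (ii) ‖x_t − x̂_t‖ ≤ ρ·‖x_{t−1} − x̂_t‖ for all t = 1,…,T. Then the cumulative target tracking error satisfies Σ_{t=1}^T ‖x_t − x⋆_t‖ ≤ (ρ/(1 − ρ))·( ‖x_0 − x̂_1‖ + Σ_{t=1}^{T−1}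 ( ‖x⋆_{t+1} − x⋆_t‖ + E_t + E_{t+1} ) ) + Σ_{t=1}^T E_t. -/
/-!
Put `a t = ‖x t - xhat t‖`. By the triangle inequality through `xs t` and `xs (t + 1)`, the
estimate drifts by at most `d t = ‖xs (t + 1) - xs t‖ + E t + E (t + 1)`, so the contraction gives
`a (t + 1) ≤ ρ * (a t + d t)`. Summing this recursion (`contraction_sum_le`) bounds `∑ a t` by
`ρ / (1 - ρ)` times the initial error plus the total drift, and
`‖x t - xs t‖ ≤ a t + E t` transfers the bound to the true target.
-/

/-- The term `ρ * a (k + 1)` on the left makes the bound inductive: the new summand contributes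
`(1 - ρ) * a (k + 2) + ρ * a (k + 2) = a (k + 2)`, and the old `ρ * a (k + 1)` is exactly what the
recursion consumes. -/
theorem contraction_sum_le (ρ D : ℝ) (a d : ℕ → ℝ) (k : ℕ) (h0 : a 1 ≤ ρ * D)
    (h : ∀ t ∈ Finset.Icc 1 k, a (t + 1) ≤ ρ * (a t + d t)) :
    (1 - ρ) * ∑ t ∈ Finset.Icc 1 (k + 1), a t + ρ * a (k + 1) ≤
      ρ * (D + ∑ t ∈ Finset.Icc 1 k, d t) := by
  induction k with
  | zero => simp; linarith
  | succ k ih =>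
    have ih' := ih fun t ht => h t (by simp only [Finset.mem_Icc] at ht ⊢; omega)
    have hk := h (k + 1) (by simp)
    rw [Finset.sum_Icc_succ_top (by omega), Finset.sum_Icc_succ_top (by omega) d]
    linarith

/-- CTTE bound: if `‖x̂_t − x⋆_t‖ ≤ E_t` and `‖x_t − x̂_t‖ ≤ ρ‖x_{t−1} − x̂_t‖`
for `t = 1,…,T`, then
`Σ_{t=1}^T ‖x_t − x⋆_t‖ ≤ (ρ/(1−ρ))·(‖x_0 − x̂_1‖ + Σ_{t=1}^{T−1}(‖x⋆_{t+1} − x⋆_t‖ + E_t + E_{t+1})) + Σ_{t=1}^T E_t`. -/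
theorem stmt12 (n T : ℕ) (hn : 1 ≤ n) (hT : 1 ≤ T)
    (ρ : ℝ) (hρ0 : 0 < ρ) (hρ1 : ρ < 1)
    (E : ℕ → ℝ) (hE : ∀ t ∈ Finset.Icc 1 T, 0 ≤ E t)
    (xs xhat x : ℕ → EuclideanSpace ℝ (Fin n))
    (h1 : ∀ t ∈ Finset.Icc 1 T, ‖xhat t - xs t‖ ≤ E t)
    (h2 : ∀ t ∈ Finset.Icc 1 T, ‖x t - xhat t‖ ≤ ρ * ‖x (t - 1) - xhat t‖) :
    ∑ t ∈ Finset.Icc 1 T, ‖x t - xs t‖ ≤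
      ρ / (1 - ρ) *
        (‖x 0 - xhat 1‖ +
          ∑ t ∈ Finset.Icc 1 (T - 1), (‖xs (t + 1) - xs t‖ + E t + E (t + 1)))
      + ∑ t ∈ Finset.Icc 1 T, E t := by
  obtain ⟨k, rfl⟩ : ∃ k, T = k + 1 := ⟨T - 1, by omega⟩
  rw [Nat.add_sub_cancel]
  have key := contraction_sum_le ρ ‖x 0 - xhat 1‖ (fun t => ‖x t - xhat t‖)
    (fun t => ‖xs (t + 1) - xs t‖ + E t + E (t + 1)) k (h2 1 (by simp)) (by
      intro t ht
      rw [Finset.mem_Icc] at ht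
      have e1 := h1 t (by rw [Finset.mem_Icc]; omega)
      have e2 := h1 (t + 1) (by rw [Finset.mem_Icc]; omega)
      refine (h2 (t + 1) (by rw [Finset.mem_Icc]; omega)).trans
        (mul_le_mul_of_nonneg_left ?_ hρ0.le)
      rw [Nat.add_sub_cancel]
      have n1 := norm_sub_le_norm_sub_add_norm_sub (x t) (xhat t) (xhat (t + 1))
      have n2 := norm_sub_le_norm_sub_add_norm_sub (xhat t) (xs t) (xhat (t + 1))
      have n3 := norm_sub_le_norm_sub_add_norm_sub (xs t) (xs (t + 1)) (xhat (t + 1))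
      rw [norm_sub_rev (xs t) (xs (t + 1)), norm_sub_rev (xs (t + 1)) (xhat (t + 1))] at n3
      linarith)
  have hsum : ∑ t ∈ Finset.Icc 1 (k + 1), ‖x t - xs t‖ ≤
      ∑ t ∈ Finset.Icc 1 (k + 1), ‖x t - xhat t‖ + ∑ t ∈ Finset.Icc 1 (k + 1), E t := by
    rw [← Finset.sum_add_distrib]
    refine Finset.sum_le_sum fun t ht => ?_
    linarith [norm_sub_le_norm_sub_add_norm_sub (x t) (xhat t) (xs t), h1 t ht]
  refine hsum.trans (add_le_add_left ?_ _)
  rw [div_mul_eq_mul_div, le_div_iff₀ (by linarith)]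
  have hnn : 0 ≤ ρ * ‖x (k + 1) - xhat (k + 1)‖ := by positivity
  linarith
end

section
/- Let n ≥ 1, m ≥ 2, let a_1,…,a_m ∈ ℝⁿ, x⋆ ∈ ℝⁿ, and w ∈ ℝᵐ. Set r_i⋆ = ‖x⋆ − a_i‖, r_i = r_i⋆ + w_i, and R = max_{i=1,…,m} r_i⋆. Define b, b⋆ ∈ ℝ^{m−1} componentwise for i = 1,…,m−1 by b_i = (1/2)(‖a_{i+1}‖² − ‖a_i‖² + r_i² − r_{i+1}²) and b⋆_i = (1/2)(‖a_{i+1}‖² − ‖a_i‖² + (r_i⋆)² − (r_{i+1}⋆)²). Then ‖b − b⋆‖ ≤ 2R·‖w‖ + ‖w‖². -/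
/-! With `d i = r i ^ 2 - rstar i ^ 2 = 2 * rstar i * w i + w i ^ 2`, the error is
`b i - bstar i = (d i - d (i + 1)) / 2`. Since `((x - y) / 2) ^ 2 ≤ (x ^ 2 + y ^ 2) / 2` and every
index occurs at most twice among the consecutive pairs, `‖b - bstar‖ ≤ ‖d‖`. Finally
`|w i| ≤ ‖w‖` gives `|d i| ≤ (2 * R + ‖w‖) * |w i|`, hence `‖d‖ ≤ (2 * R + ‖w‖) * ‖w‖`. -/

/-- Halved consecutive differences do not increase the Euclidean norm. -/
theorem sum_sq_half_diff_le (m : ℕ) (hm : 2 ≤ m) (d : ℕ → ℝ) :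
    ∑ i ∈ Finset.Icc 1 (m - 1), ((d i - d (i + 1)) / 2) ^ 2 ≤ ∑ i ∈ Finset.Icc 1 m, d i ^ 2 := by
  have h1 : ∑ i ∈ Finset.Icc 1 (m - 1), d i ^ 2 ≤ ∑ i ∈ Finset.Icc 1 m, d i ^ 2 :=
    Finset.sum_le_sum_of_subset_of_nonneg (Finset.Icc_subset_Icc_right (by omega))
      fun _ _ _ => sq_nonneg _
  have h2 : ∑ i ∈ Finset.Icc 1 (m - 1), d (i + 1) ^ 2 ≤ ∑ i ∈ Finset.Icc 1 m, d i ^ 2 := by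
    rw [← Finset.sum_image (g := fun i => i + 1) (f := fun i => d i ^ 2) (by intro x; simp)]
    refine Finset.sum_le_sum_of_subset_of_nonneg ?_ fun _ _ _ => sq_nonneg _
    intro x hx
    simp only [Finset.mem_image, Finset.mem_Icc] at hx ⊢
    omega
  calc ∑ i ∈ Finset.Icc 1 (m - 1), ((d i - d (i + 1)) / 2) ^ 2
      ≤ ∑ i ∈ Finset.Icc 1 (m - 1), (d i ^ 2 / 2 + d (i + 1) ^ 2 / 2) :=
        Finset.sum_le_sum fun i _ => by nlinarith [sq_nonneg (d i + d (i + 1))]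
    _ ≤ ∑ i ∈ Finset.Icc 1 m, d i ^ 2 := by
        rw [Finset.sum_add_distrib, ← Finset.sum_div, ← Finset.sum_div]
        linarith

/-- With `r_i⋆ = ‖x⋆ − a_i‖`, `r_i = r_i⋆ + w_i`, `R = max_i r_i⋆`, and `b, b⋆`
the right-hand sides of the OLS localization system built from the noisy and
noiseless measurements, `‖b − b⋆‖ ≤ 2R‖w‖ + ‖w‖²` (all norms Euclidean). -/
theorem stmt15 (n m : ℕ) (hn : 1 ≤ n) (hm : 2 ≤ m)
    (a : ℕ → EuclideanSpace ℝ (Fin n)) (xs : EuclideanSpace ℝ (Fin n)) (w : ℕ → ℝ)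
    (rstar r : ℕ → ℝ)
    (hrstar : ∀ i, rstar i = ‖xs - a i‖)
    (hr : ∀ i, r i = rstar i + w i)
    (R : ℝ)
    (hR : R = (Finset.Icc 1 m).sup' (Finset.nonempty_Icc.mpr (by omega)) rstar)
    (b bstar : ℕ → ℝ)
    (hb : ∀ i, b i = (‖a (i + 1)‖ ^ 2 - ‖a i‖ ^ 2 + r i ^ 2 - r (i + 1) ^ 2) / 2)
    (hbstar : ∀ i, bstar i =
      (‖a (i + 1)‖ ^ 2 - ‖a i‖ ^ 2 + rstar i ^ 2 - rstar (i + 1) ^ 2) / 2) :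
    Real.sqrt (∑ i ∈ Finset.Icc 1 (m - 1), (b i - bstar i) ^ 2) ≤
      2 * R * Real.sqrt (∑ i ∈ Finset.Icc 1 m, w i ^ 2) +
        ∑ i ∈ Finset.Icc 1 m, w i ^ 2 := by
  set S := ∑ i ∈ Finset.Icc 1 m, w i ^ 2 with hS
  have hS0 : 0 ≤ S := Finset.sum_nonneg fun _ _ => sq_nonneg _
  set W := Real.sqrt S with hW
  have hW0 : 0 ≤ W := Real.sqrt_nonneg _
  have hWS : W ^ 2 = S := Real.sq_sqrt hS0
  have hle : ∀ i ∈ Finset.Icc 1 m, rstar i ≤ R := fun i hi => hR ▸ Finset.le_sup' rstar hi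
  have hr0 : ∀ i, 0 ≤ rstar i := fun i => hrstar i ▸ norm_nonneg _
  have hR0 : 0 ≤ R := (hr0 1).trans (hle 1 (Finset.mem_Icc.mpr ⟨le_rfl, by omega⟩))
  have hd : ∀ i ∈ Finset.Icc 1 m, (r i ^ 2 - rstar i ^ 2) ^ 2 ≤ (2 * R + W) ^ 2 * w i ^ 2 := by
    intro i hi
    have hw : |w i| ≤ W :=
      Real.abs_le_sqrt (Finset.single_le_sum (f := fun i => w i ^ 2)
        (fun _ _ => sq_nonneg _) hi)
    have habs : |2 * rstar i + w i| ≤ 2 * R + W := by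
      have := hle i hi
      have := hr0 i
      rw [abs_le] at hw ⊢
      constructor <;> linarith [hw.1, hw.2]
    have hfac : (r i ^ 2 - rstar i ^ 2) ^ 2 = (2 * rstar i + w i) ^ 2 * w i ^ 2 := by
      rw [hr]; ring
    rw [hfac]
    exact mul_le_mul_of_nonneg_right (sq_le_sq' (abs_le.mp habs).1 (abs_le.mp habs).2)
      (sq_nonneg _)
  apply Real.sqrt_le_iff.mpr
  refine ⟨by positivity, ?_⟩
  calc ∑ i ∈ Finset.Icc 1 (m - 1), (b i - bstar i) ^ 2
      = ∑ i ∈ Finset.Icc 1 (m - 1),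
          (((r i ^ 2 - rstar i ^ 2) - (r (i + 1) ^ 2 - rstar (i + 1) ^ 2)) / 2) ^ 2 :=
        Finset.sum_congr rfl fun i _ => by rw [hb, hbstar]; ring
    _ ≤ ∑ i ∈ Finset.Icc 1 m, (r i ^ 2 - rstar i ^ 2) ^ 2 :=
        sum_sq_half_diff_le m hm fun i => r i ^ 2 - rstar i ^ 2
    _ ≤ ∑ i ∈ Finset.Icc 1 m, (2 * R + W) ^ 2 * w i ^ 2 := Finset.sum_le_sum hd
    _ = (2 * R * W + S) ^ 2 := by rw [← Finset.mul_sum, ← hS, ← hWS]; ring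
end
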